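/- arXiv:0705.2460 — 3 statements merged into one kernel-verified Lean document; each statement's English description precedes it below -/
import Mathlib

section
/- Mehler's formula: for 0 < t' < t and x, x' ∈ ℝ, the heat kernel satisfies p(t-t', x|x') = (2t)^{-1/2} e^{-x²/(4t) + x'²/(4t')} Σ_{n=0}^∞ (t'/t)^{n/2} φ_n(x/√(2t)) φ_n(x'/√(2t')), where φ_n(ζ) = (√π 2^n n!)^{-1/2} e^{-ζ²/2} H_n(ζ) are the Hermite orthonormal functions. -/
open Real

/-- The one-dimensional heat kernel `p(t, y | x)`. -/
noncomputable def heatKernel (t y x : ℝ) : ℝ :=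
  (Real.sqrt (2 * π * t))⁻¹ * Real.exp (-(y - x) ^ 2 / (2 * t))

/-- Hermite polynomials by the Rodrigues formula `H_n(x) = e^{x²}(-d/dx)^n e^{-x²}`. -/
noncomputable def hermiteH (n : ℕ) (x : ℝ) : ℝ :=
  (-1 : ℝ) ^ n * Real.exp (x ^ 2) * iteratedDeriv n (fun y => Real.exp (-(y ^ 2))) x

/-- Hermite orthonormal functions `φ_n`. -/
noncomputable def hermiteFun (n : ℕ) (x : ℝ) : ℝ :=
  (Real.sqrt (Real.sqrt π * 2 ^ n * n.factorial))⁻¹ * Real.exp (-(x ^ 2) / 2) * hermiteH n x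

open MeasureTheory in
theorem aux_integrable (b c d : ℝ) (hb : 0 < b) :
    Integrable (fun z : ℝ => Real.exp (-b * z ^ 2 + c * |z| + d)) := by
  have key : ∀ c : ℝ, Integrable (fun z : ℝ => Real.exp (-b * z ^ 2 + c * z + d)) := by
    intro c
    have h := (integrable_cexp_quadratic (b := (b : ℂ)) (by simpa using hb) (c : ℂ) (d : ℂ)).norm
    refine h.congr (Filter.Eventually.of_forall fun z => ?_)
    have : (-(b:ℂ) * (z:ℂ) ^ 2 + c * z + d) = ((-b * z ^ 2 + c * z + d : ℝ) : ℂ) := by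
      push_cast; ring
    simp only [this]
    rw [← Complex.ofReal_exp, Complex.norm_real, Real.norm_of_nonneg (Real.exp_pos _).le]
  refine Integrable.mono' ((key c).add (key (-c))) (by fun_prop)
    (Filter.Eventually.of_forall fun z => ?_)
  rw [Real.norm_of_nonneg (Real.exp_pos _).le]
  simp only [Pi.add_apply]
  rcases abs_cases z with ⟨h, _⟩ | ⟨h, _⟩ <;> rw [h]
  · linarith [Real.exp_pos (-b * z ^ 2 + -c * z + d)]
  · rw [show c * -z = -c * z by ring]
    linarith [Real.exp_pos (-b * z ^ 2 + c * z + d)]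

theorem aux_deriv {𝕜 : Type*} [NontriviallyNormedField 𝕜] (f : 𝕜 → 𝕜) (p q : 𝕜)
    (hf : ContDiff 𝕜 (⊤ : ℕ∞) f) (h : ∀ s, HasDerivAt f ((p + q * s) * f s) s) (n : ℕ) (s : 𝕜) :
    iteratedDeriv (n + 2) f s = (p + q * s) * iteratedDeriv (n + 1) f s
      + q * (n + 1) * iteratedDeriv n f s := by
  have hd : ∀ m : ℕ, ∀ s, HasDerivAt (iteratedDeriv m f) (iteratedDeriv (m + 1) f s) s := by
    intro m s
    rw [iteratedDeriv_succ]
    exact (hf.differentiable_iteratedDeriv m (by exact_mod_cast WithTop.coe_lt_top _) s).hasDerivAt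
  have hl : ∀ s, HasDerivAt (fun s : 𝕜 => p + q * s) q s := by
    intro s
    simpa using ((hasDerivAt_id s).const_mul q).const_add p
  have h1 : iteratedDeriv 1 f = fun s => (p + q * s) * f s := by
    funext s
    rw [iteratedDeriv_one]; exact (h s).deriv
  induction n generalizing s with
  | zero =>
    have h2 := hd 1 s
    have h3 := (hl s).mul (h s)
    rw [show ((fun s : 𝕜 => p + q * s) * f) = iteratedDeriv 1 f from h1.symm] at h3
    have := h2.unique h3
    simp only [zero_add, iteratedDeriv_zero, h1] at this ⊢
    norm_num at this ⊢
    rw [this]; ring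
  | succ n ih =>
    have h2 := hd (n + 2) s
    have h3 := ((hl s).mul (hd (n + 1) s)).add ((hd n s).const_mul (q * (n + 1)))
    rw [show ((fun s : 𝕜 => p + q * s) * iteratedDeriv (n + 1) f +
      fun s => q * (n + 1) * iteratedDeriv n f s) = iteratedDeriv (n + 2) f from (funext ih).symm] at h3
    have := h2.unique h3
    rw [show n + 1 + 2 = n + 2 + 1 by ring, this]
    push_cast; ring

/-- Hermite recursion. -/
noncomputable def hermQ (σ y : ℝ) : ℕ → ℝ
  | 0 => 1
  | 1 => 2 * y
  | (n + 2) => 2 * y * hermQ σ y (n + 1) + 2 * σ * (n + 1) * hermQ σ y n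

theorem hermQ_bound (u : ℝ) (n : ℕ) :
    |hermQ (-1) u n| ≤ hermQ 1 |u| n := by
  induction n using Nat.strong_induction_on with
  | _ n ih =>
    match n with
    | 0 => simp [hermQ]
    | 1 => simp [hermQ, abs_mul]
    | n + 2 =>
      have h1 := ih (n + 1) (by omega)
      have h0 := ih n (by omega)
      simp only [hermQ]
      refine (abs_add_le _ _).trans ?_
      have hn : |(n:ℝ) + 1| = n + 1 := abs_of_pos (by positivity)
      simp only [abs_mul, abs_neg, abs_one, hn, Nat.abs_ofNat]
      gcongr

theorem hermQ_hasSum (σ y : ℝ) (s : ℂ) :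
    HasSum (fun n : ℕ => (hermQ σ y n : ℂ) * s ^ n / n.factorial)
      (Complex.exp (2 * y * s + σ * s ^ 2)) := by
  set f : ℂ → ℂ := fun s => Complex.exp (2 * y * s + σ * s ^ 2) with hf
  have hc : ContDiff ℂ (⊤ : ℕ∞) f := by fun_prop
  have hder : ∀ s, HasDerivAt f ((2 * y + 2 * σ * s) * f s) s := by
    intro s
    have h1 : HasDerivAt (fun s : ℂ => 2 * y * s + σ * s ^ 2) (2 * y + 2 * σ * s) s := by
      have := ((hasDerivAt_id s).const_mul (2 * y : ℂ)).add ((hasDerivAt_pow 2 s).const_mul (σ : ℂ))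
      refine this.congr_deriv ?_
      norm_num; ring
    refine h1.cexp.congr_deriv ?_
    simp only [hf]; ring
  have hq : ∀ n, iteratedDeriv n f 0 = hermQ σ y n := by
    intro n
    induction n using Nat.strong_induction_on with
    | _ n ih =>
      match n with
      | 0 => simp [hermQ, hf]
      | 1 =>
        rw [iteratedDeriv_one, (hder 0).deriv]
        simp [hermQ, hf]
      | n + 2 =>
        rw [aux_deriv f _ _ hc hder, ih (n + 1) (by omega), ih n (by omega)]
        simp only [hermQ]; push_cast; ring
  have := Complex.hasSum_taylorSeries_of_entire (hc.differentiable (by simp)) 0 s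
  refine this.congr_fun ?_
  intro n
  rw [hq]; simp only [sub_zero, smul_eq_mul]; ring

theorem hermiteH_eq (n : ℕ) (x : ℝ) : hermiteH n x = hermQ (-1) x n := by
  set f : ℝ → ℝ := fun y => Real.exp (-(y ^ 2)) with hf
  have hc : ContDiff ℝ (⊤ : ℕ∞) f := by fun_prop
  have hder : ∀ s, HasDerivAt f ((0 + (-2) * s) * f s) s := by
    intro s
    refine (hasDerivAt_pow 2 s).neg.exp.congr_deriv ?_
    simp only [hf]; norm_num; ring
  have he : Real.exp (x ^ 2) * f x = 1 := by
    simp only [hf]; rw [← Real.exp_add]; simp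
  induction n using Nat.strong_induction_on with
  | _ n ih =>
    match n with
    | 0 => simpa [hermQ, hermiteH] using he
    | 1 =>
      simp only [hermiteH, hermQ]
      rw [iteratedDeriv_one, (hder x).deriv]
      linear_combination 2 * x * he
    | n + 2 =>
      simp only [hermQ]
      rw [← ih (n + 1) (by omega), ← ih n (by omega)]
      simp only [hermiteH]
      rw [aux_deriv f _ _ hc hder]
      ring

theorem aux_norm (v z : ℝ) : ‖(v:ℂ) + Complex.I * z‖ ^ 2 = v ^ 2 + z ^ 2 := by
  rw [← Complex.normSq_eq_norm_sq, Complex.normSq_apply]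
  simp; ring

theorem aux_norm_le (v z : ℝ) : ‖(v:ℂ) + Complex.I * z‖ ≤ |v| + |z| := by
  refine (norm_add_le _ _).trans ?_
  simp

theorem aux_norm_exp (z : ℝ) : ‖Complex.exp (-(z:ℂ) ^ 2)‖ = Real.exp (-z ^ 2) := by
  rw [show (-(z:ℂ)^2) = ((-z^2 : ℝ) : ℂ) by push_cast; ring, ← Complex.ofReal_exp,
    Complex.norm_real, Real.norm_of_nonneg (Real.exp_pos _).le]

open MeasureTheory in
theorem aux_int_pow (v : ℝ) (n : ℕ) :
    Integrable (fun z : ℝ => ((v:ℂ) + Complex.I * z) ^ n * Complex.exp (-(z:ℂ) ^ 2)) := by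
  refine Integrable.mono' ((aux_integrable 1 1 |v| one_pos).const_mul (n.factorial : ℝ))
    (by fun_prop) (Filter.Eventually.of_forall fun z => ?_)
  rw [norm_mul, aux_norm_exp, norm_pow]
  have h1 := aux_norm_le v z
  have h2 := Real.pow_div_factorial_le_exp (|v| + |z|) (by positivity) n
  rw [div_le_iff₀ (by positivity)] at h2
  calc _ ≤ (|v| + |z|) ^ n * Real.exp (-z ^ 2) := by gcongr
    _ ≤ (Real.exp (|v| + |z|) * n.factorial) * Real.exp (-z ^ 2) := by gcongr
    _ = n.factorial * (Real.exp (|v| + |z|) * Real.exp (-z ^ 2)) := by ring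
    _ = _ := by rw [← Real.exp_add]; congr 2; ring

theorem aux_hasDeriv_w (v z : ℝ) :
    HasDerivAt (fun z : ℝ => (v:ℂ) + Complex.I * z) Complex.I z := by
  simpa using (((hasDerivAt_id z).ofReal_comp).const_mul Complex.I).const_add (v:ℂ)

theorem aux_hasDeriv_E (z : ℝ) :
    HasDerivAt (fun z : ℝ => Complex.exp (-(z:ℂ) ^ 2)) (-2 * z * Complex.exp (-(z:ℂ) ^ 2)) z := by
  have h := (((hasDerivAt_id z).ofReal_comp).pow 2).neg.cexp
  refine h.congr_deriv ?_
  simp; ring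

open MeasureTheory in
theorem aux_J (v : ℝ) (n : ℕ) :
    ∫ z : ℝ, ((v:ℂ) + Complex.I * z) ^ n * Complex.exp (-(z:ℂ) ^ 2)
      = (Real.sqrt π : ℂ) * hermQ (-1) v n / 2 ^ n := by
  induction n using Nat.strong_induction_on with
  | _ n ih =>
    have h0 : ∫ z : ℝ, ((v:ℂ) + Complex.I * z) ^ 0 * Complex.exp (-(z:ℂ) ^ 2)
        = (Real.sqrt π : ℂ) := by
      have := integral_gaussian 1
      rw [div_one] at this
      rw [← this, ← integral_complex_ofReal]
      congr 1; funext z; push_cast; simp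
    match n with
    | 0 => rw [h0]; simp [hermQ]
    | 1 =>
      have key : ∀ z : ℝ, -2 * z * Complex.exp (-(z:ℂ) ^ 2) =
          (2 * Complex.I) * (((v:ℂ) + Complex.I * z) ^ 1 * Complex.exp (-(z:ℂ) ^ 2))
          - (2 * Complex.I * v) * (((v:ℂ) + Complex.I * z) ^ 0 * Complex.exp (-(z:ℂ) ^ 2)) := by
        intro z
        linear_combination (-2 * z * Complex.exp (-(z:ℂ) ^ 2)) * Complex.I_sq
      have hi := ((aux_int_pow v 1).const_mul (2 * Complex.I)).sub
        ((aux_int_pow v 0).const_mul (2 * Complex.I * v))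
      have hz := integral_eq_zero_of_hasDerivAt_of_integrable
        (fun z => (aux_hasDeriv_E z).congr_deriv (key z)) hi (by simpa using aux_int_pow v 0)
      rw [integral_sub ((aux_int_pow v 1).const_mul _) ((aux_int_pow v 0).const_mul _),
        integral_const_mul, integral_const_mul, h0] at hz
      simp only [hermQ]
      push_cast
      linear_combination (-Complex.I / 2) * hz + ((∫ z : ℝ, ((v:ℂ) + Complex.I * z) ^ 1 * Complex.exp (-(z:ℂ) ^ 2)) - v * (Real.sqrt π : ℂ)) * Complex.I_sq
    | n + 2 =>
      have ih1 := ih (n + 1) (by omega)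
      have ih0 := ih n (by omega)
      set F : ℕ → ℝ → ℂ := fun n z => ((v:ℂ) + Complex.I * z) ^ n * Complex.exp (-(z:ℂ) ^ 2) with hF
      have hFi : ∀ n, Integrable (F n) := aux_int_pow v
      have hd : ∀ z, HasDerivAt (F (n + 1)) ((((n:ℂ) + 1) * Complex.I) * F n z
          + ((2 * Complex.I) * F (n + 2) z + (-(2 * Complex.I * v)) * F (n + 1) z)) z := by
        intro z
        refine (((aux_hasDeriv_w v z).pow (n + 1)).mul (aux_hasDeriv_E z)).congr_deriv ?_
        simp only [hF]
        push_cast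
        simp only [Nat.add_sub_cancel, Pi.pow_apply]
        linear_combination (-2 * z * ((v:ℂ) + Complex.I * z) ^ n * ((v:ℂ) + Complex.I * z) * Complex.exp (-(z:ℂ) ^ 2)) * Complex.I_sq
      have i0 := (hFi n).const_mul (((n:ℂ) + 1) * Complex.I)
      have i2 := (hFi (n + 2)).const_mul (2 * Complex.I)
      have i1 := (hFi (n + 1)).const_mul (-(2 * Complex.I * v))
      have hz := integral_eq_zero_of_hasDerivAt_of_integrable hd (i0.add (i2.add i1)) (hFi (n + 1))
      have e1 := integral_add i0 (i2.add i1)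
      have e2 := integral_add i2 i1
      simp only [Pi.add_apply] at e1
      rw [e1, e2, integral_const_mul, integral_const_mul, integral_const_mul] at hz
      have hz' : ((n:ℂ) + 1) * (∫ z, F n z) + 2 * (∫ z, F (n + 2) z)
          - 2 * v * (∫ z, F (n + 1) z) = 0 := by
        have : Complex.I * (((n:ℂ) + 1) * (∫ z, F n z) + 2 * (∫ z, F (n + 2) z)
          - 2 * v * (∫ z, F (n + 1) z)) = 0 := by rw [← hz]; ring
        exact (mul_eq_zero.mp this).resolve_left Complex.I_ne_zero
      change ∫ z, F n z = _ at ih0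
      change ∫ z, F (n + 1) z = _ at ih1
      change ∫ z, F (n + 2) z = _
      rw [ih0, ih1] at hz'
      simp only [hermQ]
      push_cast
      have h2 : (2:ℂ) ^ n ≠ 0 := pow_ne_zero _ two_ne_zero
      have e3 : ∫ z, F (n + 2) z = v * ((Real.sqrt π : ℂ) * hermQ (-1) v (n + 1) / 2 ^ (n + 1))
          - ((n:ℂ) + 1) / 2 * ((Real.sqrt π : ℂ) * hermQ (-1) v n / 2 ^ n) := by
        linear_combination (1 / 2) * hz'
      rw [e3]
      simp only [pow_succ]
      field_simp
      ring

open MeasureTheory in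
theorem aux_mehler (ρ u v : ℝ) (h0 : 0 < ρ) (h1 : ρ < 1) :
    HasSum (fun n : ℕ => ρ ^ n / (2 ^ n * n.factorial) * hermQ (-1) u n * hermQ (-1) v n)
      ((Real.sqrt (1 - ρ ^ 2))⁻¹ *
        Real.exp ((2 * ρ * u * v - ρ ^ 2 * (u ^ 2 + v ^ 2)) / (1 - ρ ^ 2))) := by
  have hρ : 0 < 1 - ρ ^ 2 := by nlinarith
  have hsum : ∀ z : ℝ, HasSum (fun n : ℕ => hermQ 1 |u| n * (ρ * ‖(v:ℂ) + Complex.I * z‖) ^ n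
      / n.factorial * Real.exp (-z ^ 2))
      (Real.exp (2 * |u| * (ρ * ‖(v:ℂ) + Complex.I * z‖) + (ρ * ‖(v:ℂ) + Complex.I * z‖) ^ 2)
        * Real.exp (-z ^ 2)) := by
    intro z
    have := hermQ_hasSum 1 |u| ((ρ * ‖(v:ℂ) + Complex.I * z‖ : ℝ) : ℂ)
    refine HasSum.mul_right _ ?_
    rw [← Complex.hasSum_ofReal]
    convert this using 1
    · funext n; push_cast; ring
    · push_cast; congr 1; ring
  have main := hasSum_integral_of_dominated_convergence (μ := volume)
    (F := fun (n : ℕ) (z : ℝ) => ((ρ ^ n / n.factorial * hermQ (-1) u n : ℝ) : ℂ) *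
      (((v:ℂ) + Complex.I * z) ^ n * Complex.exp (-(z:ℂ) ^ 2)))
    (f := fun z : ℝ => Complex.exp (((-(1 - ρ ^ 2) : ℝ) : ℂ) * (z:ℂ) ^ 2
      + (2 * Complex.I * ρ * (u - ρ * v)) * z + (2 * u * ρ * v - ρ ^ 2 * v ^ 2)))
    (fun n z => hermQ 1 |u| n * (ρ * ‖(v:ℂ) + Complex.I * z‖) ^ n
      / n.factorial * Real.exp (-z ^ 2))
    (fun n => by fun_prop)
    (fun n => Filter.Eventually.of_forall fun z => by
      rw [norm_mul, norm_mul, aux_norm_exp, norm_pow, Complex.norm_real, Real.norm_eq_abs, abs_mul,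
        abs_of_nonneg (by positivity : 0 ≤ ρ ^ n / (n.factorial:ℝ))]
      have := hermQ_bound u n
      calc _ ≤ ρ ^ n / n.factorial * hermQ 1 |u| n *
            (‖(v:ℂ) + Complex.I * z‖ ^ n * Real.exp (-z ^ 2)) := by gcongr
        _ = _ := by rw [mul_pow]; ring)
    (Filter.Eventually.of_forall fun z => (hsum z).summable)
    (by
      simp only [(hsum _).tsum_eq]
      refine Integrable.mono' (aux_integrable (1 - ρ ^ 2) (2 * |u| * ρ)
        (2 * |u| * ρ * |v| + ρ ^ 2 * v ^ 2) hρ) (by fun_prop)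
        (Filter.Eventually.of_forall fun z => ?_)
      rw [← Real.exp_add, Real.norm_of_nonneg (Real.exp_pos _).le, Real.exp_le_exp, mul_pow,
        aux_norm]
      have := mul_le_mul_of_nonneg_left (aux_norm_le v z) (by positivity : 0 ≤ 2 * |u| * ρ)
      linarith)
    (Filter.Eventually.of_forall fun z => by
      have := (hermQ_hasSum (-1) u (ρ * ((v:ℂ) + Complex.I * z))).mul_right
        (Complex.exp (-(z:ℂ) ^ 2))
      rw [← Complex.exp_add] at this
      rw [show (((-(1 - ρ ^ 2) : ℝ) : ℂ) * (z:ℂ) ^ 2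
        + (2 * Complex.I * ρ * (u - ρ * v)) * z + (2 * u * ρ * v - ρ ^ 2 * v ^ 2)) =
        2 * u * (ρ * ((v:ℂ) + Complex.I * z)) + ((-1 : ℝ) : ℂ) * (ρ * ((v:ℂ) + Complex.I * z)) ^ 2
          + -(z:ℂ) ^ 2 by
        push_cast
        linear_combination (ρ ^ 2 * z ^ 2 : ℂ) * Complex.I_sq]
      refine this.congr_fun fun n => ?_
      push_cast; rw [mul_pow]; ring)
  rw [integral_cexp_quadratic (by rw [Complex.ofReal_re]; linarith)] at main
  simp only [integral_const_mul, aux_J] at main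
  have hpi : (Real.sqrt π : ℂ) ≠ 0 := by
    exact_mod_cast (Real.sqrt_pos.mpr Real.pi_pos).ne'
  rw [← Complex.hasSum_ofReal]
  have m2 := main.mul_left ((Real.sqrt π : ℂ)⁻¹)
  have hρC : ((1:ℂ) - ρ ^ 2) ≠ 0 := by exact_mod_cast hρ.ne'
  have m3 := m2.congr_fun (g := fun n : ℕ =>
    ((ρ ^ n / (2 ^ n * n.factorial) * hermQ (-1) u n * hermQ (-1) v n : ℝ) : ℂ))
    (fun n => by push_cast; field_simp)
  suffices hval : _ = _ from Eq.subst (motive := fun a => HasSum _ a) hval m3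
  symm
  · have e1 : ((π:ℂ) / -((-(1 - ρ ^ 2) : ℝ) : ℂ)) ^ (1 / 2 : ℂ)
        = (Real.sqrt π : ℂ) * (Real.sqrt (1 - ρ ^ 2) : ℂ)⁻¹ := by
      rw [← Complex.ofReal_inv, ← Complex.ofReal_mul, ← div_eq_mul_inv,
        ← Real.sqrt_div Real.pi_pos.le, Real.sqrt_eq_rpow, Complex.ofReal_cpow (by positivity)]
      push_cast; congr 1; ring
    rw [e1]
    push_cast
    rw [mul_assoc (Real.sqrt π : ℂ), inv_mul_cancel_left₀ hpi]
    congr 2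
    have : (-1 + (ρ:ℂ) ^ 2) ≠ 0 := by
      intro h; apply hρC; linear_combination -h
    have e2 : ((2 * Complex.I * ρ * (u - ρ * v)) ^ 2 / (4 * ((ρ:ℂ) ^ 2 - 1)))
        = ρ ^ 2 * (u - ρ * v) ^ 2 / (1 - ρ ^ 2) := by
      rw [show (2 * Complex.I * ρ * (u - ρ * v) : ℂ) ^ 2 = - 4 * ρ ^ 2 * (u - ρ * v) ^ 2 by
        linear_combination (4 * ρ ^ 2 * (u - ρ * v) ^ 2 : ℂ) * Complex.I_sq]
      rw [show (ρ:ℂ) ^ 2 - 1 = - (1 - ρ ^ 2) by ring]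
      field_simp
    rw [neg_sub, e2]
    field_simp
    ring

/-- Mehler's formula for the heat kernel. -/
theorem mehler_formula (t t' x x' : ℝ) (ht' : 0 < t') (htt : t' < t) :
    heatKernel (t - t') x x' =
      (Real.sqrt (2 * t))⁻¹ * Real.exp (-(x ^ 2) / (4 * t) + x' ^ 2 / (4 * t')) *
        ∑' n : ℕ, (t' / t) ^ ((n : ℝ) / 2) *
          hermiteFun n (x / Real.sqrt (2 * t)) * hermiteFun n (x' / Real.sqrt (2 * t')) := by
  have ht : 0 < t := ht'.trans htt
  set ρ := Real.sqrt (t' / t) with hρd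
  have hρ2 : ρ ^ 2 = t' / t := Real.sq_sqrt (by positivity)
  have hρ0 : 0 < ρ := Real.sqrt_pos.mpr (by positivity)
  have hlt : t' / t < 1 := (div_lt_one ht).mpr htt
  have hρ1 : ρ < 1 := by nlinarith
  set u := x / Real.sqrt (2 * t) with hu
  set v := x' / Real.sqrt (2 * t') with hv
  have hu2 : u ^ 2 = x ^ 2 / (2 * t) := by
    rw [hu, div_pow, Real.sq_sqrt (by positivity)]
  have hv2 : v ^ 2 = x' ^ 2 / (2 * t') := by
    rw [hv, div_pow, Real.sq_sqrt (by positivity)]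
  have huv : ρ * u * v = x * x' / (2 * t) := by
    have hs : ρ = Real.sqrt (2 * t') / Real.sqrt (2 * t) := by
      rw [hρd, ← Real.sqrt_div (by positivity)]; congr 1; field_simp
    have h1 : Real.sqrt (2 * t') ≠ 0 := (Real.sqrt_pos.mpr (by positivity)).ne'
    have h2 : Real.sqrt (2 * t) ≠ 0 := (Real.sqrt_pos.mpr (by positivity)).ne'
    have h3 : Real.sqrt (2 * t) ^ 2 = 2 * t := Real.sq_sqrt (by positivity)
    rw [← h3]
    simp only [hs, hu, hv]
    generalize Real.sqrt (2 * t) = a at *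
    generalize Real.sqrt (2 * t') = b at *
    field_simp
  have hterm : ∀ n : ℕ, (t' / t) ^ ((n : ℝ) / 2) * hermiteFun n u * hermiteFun n v =
      ((Real.sqrt π)⁻¹ * Real.exp (-(u ^ 2) / 2 + -(v ^ 2) / 2)) *
      (ρ ^ n / (2 ^ n * n.factorial) * hermQ (-1) u n * hermQ (-1) v n) := by
    intro n
    have hp : (t' / t) ^ ((n : ℝ) / 2) = ρ ^ n := by
      rw [hρd, Real.sqrt_eq_rpow, ← Real.rpow_natCast, ← Real.rpow_mul (by positivity)]
      congr 1; ring
    rw [hp, hermiteFun, hermiteFun, hermiteH_eq, hermiteH_eq, Real.exp_add]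
    have hs : (Real.sqrt (Real.sqrt π * 2 ^ n * n.factorial))⁻¹ *
        (Real.sqrt (Real.sqrt π * 2 ^ n * n.factorial))⁻¹
        = (Real.sqrt π)⁻¹ * (1 / (2 ^ n * n.factorial)) := by
      rw [← mul_inv, Real.mul_self_sqrt (by positivity), mul_assoc, mul_inv, one_div]
    linear_combination (ρ ^ n * Real.exp (-(u ^ 2) / 2) * Real.exp (-(v ^ 2) / 2)
      * hermQ (-1) u n * hermQ (-1) v n) * hs
  simp only [hterm]
  rw [tsum_mul_left, (aux_mehler ρ u v hρ0 hρ1).tsum_eq, heatKernel]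
  have hsq : (Real.sqrt (2 * π * (t - t')))⁻¹ =
      (Real.sqrt (2 * t))⁻¹ * (Real.sqrt π)⁻¹ * (Real.sqrt (1 - ρ ^ 2))⁻¹ := by
    rw [← mul_inv, ← mul_inv, ← Real.sqrt_mul (by positivity), ← Real.sqrt_mul (by positivity), hρ2]
    congr 2; field_simp
  have hexp : Real.exp (-(x - x') ^ 2 / (2 * (t - t'))) =
      Real.exp (-(x ^ 2) / (4 * t) + x' ^ 2 / (4 * t')) *
      (Real.exp (-(u ^ 2) / 2 + -(v ^ 2) / 2) *
        Real.exp ((2 * ρ * u * v - ρ ^ 2 * (u ^ 2 + v ^ 2)) / (1 - ρ ^ 2))) := by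
    rw [← Real.exp_add, ← Real.exp_add]
    congr 1
    have h3 : t - t' ≠ 0 := by linarith
    have h4 : 2 * ρ * u * v = x * x' / t := by
      rw [show 2 * ρ * u * v = 2 * (ρ * u * v) by ring, huv]; field_simp
    rw [h4, hρ2, hu2, hv2]
    have h5 : 1 - t' / t = (t - t') / t := by field_simp
    rw [h5]
    field_simp
    ring
  rw [hsq, hexp]
  ring
end

section
/- Selberg-type Gaussian integral with Vandermonde to the first power: for t > 0, ∫_{W_N} e^{-|x|²/(2t)} h_N(x) dx = C'_N t^{N(N+1)/4}, where C'_N = 2^{N/2} ∏_{j=1}^N Γ(j/2). -/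
open MeasureTheory Real

/-- The Vandermonde product `h_N(x) = ∏_{j<k}(x_k - x_j)`. -/
noncomputable def vandermonde (N : ℕ) (x : Fin N → ℝ) : ℝ :=
  ∏ j : Fin N, ∏ k ∈ Finset.Ioi j, (x k - x j)

open Polynomial in
/-- Monic Hermite polynomials for the weight `exp (-x^2/t)`. -/
noncomputable def hP (t : ℝ) : ℕ → Polynomial ℝ
  | 0 => 1
  | n + 1 => X * hP t n - C (t / 2) * derivative (hP t n)

open Polynomial in
lemma monic_aux (n : ℕ) (c : ℝ) (p : Polynomial ℝ) (hm : p.Monic) (hd : p.natDegree = n) :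
    (X * p - C c * derivative p).Monic ∧ (X * p - C c * derivative p).natDegree = n + 1 := by
  have h1 : (X * p).Monic := monic_X.mul hm
  have hdd : (X * p).natDegree = n + 1 := by
    rw [monic_X.natDegree_mul hm, hd, natDegree_X, add_comm]
  have hlt : (C c * derivative p).degree < (X * p).degree := by
    have hle : (C c * derivative p).degree ≤ (derivative p).degree := by
      rw [← smul_eq_C_mul]; exact degree_smul_le _ _
    refine lt_of_le_of_lt hle ?_
    rw [degree_eq_natDegree h1.ne_zero, hdd]
    refine lt_of_le_of_lt degree_derivative_le ?_
    rw [degree_eq_natDegree hm.ne_zero, hd]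
    exact_mod_cast Nat.lt_succ_self n
  refine ⟨h1.sub_of_left hlt, ?_⟩
  rw [natDegree_sub_eq_left_of_natDegree_lt, hdd]
  have := natDegree_lt_natDegree (p := C c * derivative p) (q := X * p)
  by_cases h0 : C c * derivative p = 0
  · rw [h0, hdd]; simp
  · exact this h0 hlt

lemma hP_monic (t : ℝ) (n : ℕ) : (hP t n).Monic ∧ (hP t n).natDegree = n := by
  induction n with
  | zero => exact ⟨Polynomial.monic_one, Polynomial.natDegree_one⟩
  | succ n ih => exact monic_aux n _ _ ih.1 ih.2

noncomputable def gw (b x : ℝ) : ℝ := Real.exp (-b * x ^ 2)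

lemma gw_int {b : ℝ} (hb : 0 < b) (p : Polynomial ℝ) :
    Integrable (fun x : ℝ => p.eval x * gw b x) := by
  induction p using Polynomial.induction_on' with
  | add p q hp hq =>
    simp only [Polynomial.eval_add, add_mul]
    exact hp.add hq
  | monomial n a =>
    have h := (integrable_rpow_mul_exp_neg_mul_sq hb (s := n)
      (by have : (0:ℝ) ≤ n := Nat.cast_nonneg n
          linarith)).const_mul a
    refine h.congr (Filter.Eventually.of_forall fun x => ?_)
    simp [gw, mul_assoc]

lemma gw_deriv (b : ℝ) (p : Polynomial ℝ) (x : ℝ) :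
    HasDerivAt (fun x : ℝ => p.eval x * gw b x)
      ((Polynomial.derivative p - Polynomial.C (2 * b) * Polynomial.X * p).eval x * gw b x) x := by
  have h1 := p.hasDerivAt x
  have h2 : HasDerivAt (gw b) (gw b x * (-b * (2 * x))) x := by
    have := ((hasDerivAt_pow 2 x).const_mul (-b)).exp
    refine this.congr_deriv ?_
    simp [gw]
  refine (h1.mul h2).congr_deriv ?_
  simp only [Polynomial.eval_sub, Polynomial.eval_mul, Polynomial.eval_C, Polynomial.eval_X]
  ring

lemma gw_integral_deriv {b : ℝ} (hb : 0 < b) (p : Polynomial ℝ) :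
    ∫ x, (Polynomial.derivative p - Polynomial.C (2 * b) * Polynomial.X * p).eval x * gw b x = 0 :=
  integral_eq_zero_of_hasDerivAt_of_integrable (gw_deriv b p) (gw_int hb _) (gw_int hb _)

lemma gw_integral_Iic {b : ℝ} (hb : 0 < b) (p : Polynomial ℝ) (a : ℝ) :
    ∫ x in Set.Iic a, (Polynomial.derivative p - Polynomial.C (2 * b) * Polynomial.X * p).eval x
      * gw b x = p.eval a * gw b a := by
  rw [integral_Iic_of_hasDerivAt_of_tendsto' (m := 0) (fun x _ => gw_deriv b p x)
    (gw_int hb _).integrableOn, sub_zero]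
  exact tendsto_zero_of_hasDerivAt_of_integrableOn_Iic (a := 0) (fun x _hx ↦ gw_deriv b p x)
      (gw_int hb _).integrableOn (gw_int hb _).integrableOn

lemma hP_step {t : ℝ} (ht : 0 < t) (n : ℕ) (q : Polynomial ℝ) :
    ∫ x, (q * hP t (n + 1)).eval x * gw (1 / t) x =
      t / 2 * ∫ x, (Polynomial.derivative q * hP t n).eval x * gw (1 / t) x := by
  have hb : 0 < 1 / t := by positivity
  have h := gw_integral_deriv hb (q * hP t n)
  rw [← integral_const_mul, ← sub_eq_zero, ← integral_sub (gw_int hb _) ((gw_int hb _).const_mul _)]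
  rw [← mul_zero (-(t / 2)), ← h, ← integral_const_mul]
  congr 1
  ext x
  simp [hP]
  field_simp
  ring

lemma hP_orth {t : ℝ} (ht : 0 < t) (n : ℕ) : ∀ q : Polynomial ℝ, q.natDegree ≤ n →
    ∫ x, (q * hP t n).eval x * gw (1 / t) x =
      (t / 2) ^ n * n.factorial * √(π * t) * q.coeff n := by
  induction n with
  | zero =>
    intro q hq
    rw [Polynomial.eq_C_of_natDegree_le_zero hq]
    simp only [hP, mul_one, Polynomial.eval_C, integral_const_mul, gw, integral_gaussian]
    simp [mul_comm]
  | succ n ih =>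
    intro q hq
    rw [hP_step ht, ih _ ((Polynomial.natDegree_derivative_le q).trans (by omega)),
      Polynomial.coeff_derivative, Nat.factorial_succ]
    push_cast
    ring

lemma measW (n : ℕ) : MeasurableSet {x : Fin n → ℝ | StrictMono x} := by
  have : {x : Fin n → ℝ | StrictMono x} = ⋂ i, ⋂ j, {x | i < j → x i < x j} := by
    ext x; simp [StrictMono]
  rw [this]
  refine MeasurableSet.iInter fun i => MeasurableSet.iInter fun j => ?_
  by_cases h : i < j
  · simp only [h, true_imp_iff]
    exact measurableSet_lt (measurable_pi_apply i) (measurable_pi_apply j)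
  · simp [h]

lemma integrable_slice {n : ℕ} (i : Fin (n + 1)) (f : ℝ → ℝ) (g : (Fin n → ℝ) → ℝ)
    (hf : Integrable f) (hg : Integrable g) :
    Integrable (fun x : Fin (n + 1) → ℝ => f (x i) * g (fun k => x (i.succAbove k))) := by
  have h := (volume_preserving_piFinSuccAbove (fun _ : Fin (n + 1) => ℝ) i)
  exact h.integrable_comp_of_integrable (hf.mul_prod hg)

lemma slice {n : ℕ} (i : Fin (n + 1)) (f : ℝ → ℝ) (g : (Fin n → ℝ) → ℝ)
    (hf : Integrable f) (hg : Integrable g) :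
    ∫ x in {x : Fin (n + 1) → ℝ | StrictMono x}, f (x i) * g (fun k => x (i.succAbove k)) =
    ∫ y in {y : Fin n → ℝ | StrictMono y},
      (∫ u in {u : ℝ | StrictMono (i.insertNth u y : Fin (n + 1) → ℝ)}, f u) * g y := by
  have h := (volume_preserving_piFinSuccAbove (fun _ : Fin (n + 1) => ℝ) i).symm
  have hs : ∀ z : ℝ × (Fin n → ℝ), (MeasurableEquiv.piFinSuccAbove (fun _ : Fin (n + 1) => ℝ) i).symm z
      = i.insertNth z.1 z.2 := fun _ => rfl
  rw [← h.map_eq, setIntegral_map_equiv, ← integral_indicator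
    ((MeasurableEquiv.measurable _) (measW _)), Measure.volume_eq_prod, integral_prod_symm,
    ← integral_indicator (measW _)]
  · congr 1
    ext y
    by_cases hy : StrictMono y
    · rw [Set.indicator_of_mem (by exact hy), ← integral_mul_const, ← integral_indicator]
      · congr 1
        ext u
        simp [Set.indicator, hs]
        rfl
      · have hm : Measurable (fun u : ℝ => (i.insertNth u y : Fin (n + 1) → ℝ)) := by
          refine measurable_pi_iff.2 (i.forall_iff_succAbove.2 ⟨?_, fun j => ?_⟩)
          · simpa using measurable_id'
          · simp
        exact hm (measW _)
    · rw [Set.indicator_of_notMem (by exact hy)]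
      rw [← integral_zero ℝ ℝ (μ := volume)]
      congr 1
      ext u
      rw [Set.indicator_of_notMem]
      intro hu
      apply hy
      have hu' : StrictMono (i.insertNth u y : Fin (n + 1) → ℝ) := hu
      have := hu'.comp (Fin.strictMono_succAbove i)
      convert this using 1
      ext k; simp
  · refine Integrable.indicator ?_ ((MeasurableEquiv.measurable _) (measW _))
    have := hf.mul_prod hg
    refine this.congr (Filter.Eventually.of_forall fun z => ?_)
    simp [hs]

/-- Cumulative values. -/
noncomputable def cum {n : ℕ} (y : Fin n → ℝ) (Φ : ℝ → ℝ) (c : ℝ) : ℕ → ℝ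
  | 0 => 0
  | k + 1 => if h : k < n then Φ (y ⟨k, h⟩) else c

def cumT {n : ℕ} (y : Fin n → ℝ) : ℕ → Set ℝ
  | 0 => ∅
  | k + 1 => if h : k < n then Set.Iic (y ⟨k, h⟩) else Set.univ

lemma cumT_meas {n : ℕ} (y : Fin n → ℝ) (k : ℕ) : MeasurableSet (cumT y k) := by
  cases k with
  | zero => exact MeasurableSet.empty
  | succ k =>
    simp only [cumT]
    split_ifs
    · exact measurableSet_Iic
    · exact MeasurableSet.univ

lemma cumT_int {n : ℕ} (y : Fin n → ℝ) (f : ℝ → ℝ) (k : ℕ) :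
    ∫ u in cumT y k, f u = cum y (fun a => ∫ u in Set.Iic a, f u) (∫ u, f u) k := by
  cases k with
  | zero => simp [cum, cumT]
  | succ k =>
    simp only [cumT, cum]
    split_ifs <;> simp

lemma mem_cumT {n : ℕ} (y : Fin n → ℝ) (hy : StrictMono y) (u : ℝ) (m : ℕ)
    (hm : m ≤ n) : u ∈ cumT y m ↔ ¬ (∀ k : Fin n, (k : ℕ) < m → y k < u) := by
  cases m with
  | zero => simp [cumT]
  | succ m =>
    have hm' : m < n := hm
    simp only [cumT, hm', dif_pos, Set.mem_Iic]
    constructor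
    · intro h h2
      exact absurd (h2 ⟨m, hm'⟩ (Nat.lt_succ_self m)) (not_lt.2 h)
    · intro h
      by_contra hc
      apply h
      intro k hk
      refine lt_of_le_of_lt (hy.monotone (b := ⟨m, hm'⟩) ?_) (not_le.1 hc)
      exact Fin.mk_le_mk.2 (Nat.le_of_lt_succ hk)

lemma mem_cumT' {n : ℕ} (y : Fin n → ℝ) (hy : StrictMono y) (u : ℝ) (hu : ∀ k, y k ≠ u) (m : ℕ) :
     u ∈ cumT y (m + 1) ↔ (∀ k : Fin n, m ≤ (k : ℕ) → u < y k) := by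
  by_cases hm' : m < n
  · simp only [cumT, hm', dif_pos, Set.mem_Iic]
    constructor
    · intro h k hk
      have : u < y ⟨m, hm'⟩ := lt_of_le_of_ne h (hu _).symm
      exact this.trans_le (hy.monotone hk)
    · intro h
      exact (h ⟨m, hm'⟩ le_rfl).le
  · simp only [cumT, hm']
    simp
    intro k hk
    omega

lemma ins_iff {n : ℕ} (y : Fin n → ℝ) (hy : StrictMono y) (u : ℝ) (i : Fin (n + 1)) :
    StrictMono (i.insertNth u y : Fin (n + 1) → ℝ) ↔
      (∀ k : Fin n, (k : ℕ) < i → y k < u) ∧ (∀ k : Fin n, (i : ℕ) ≤ (k : ℕ) → u < y k) := by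
  rw [Fin.strictMono_insertNth_iff]
  constructor
  · rintro ⟨_, h1, h2⟩
    exact ⟨fun k hk => h1 k hk, fun k hk => h2 k hk⟩
  · rintro ⟨h1, h2⟩
    exact ⟨hy, fun k hk => h1 k hk, fun k hk => h2 k hk⟩

lemma slice_int {n : ℕ} (y : Fin n → ℝ) (hy : StrictMono y) (f : ℝ → ℝ) (hf : Integrable f)
    (i : Fin (n + 1)) :
    ∫ u in {u : ℝ | StrictMono (i.insertNth u y : Fin (n + 1) → ℝ)}, f u =
      cum y (fun a => ∫ u in Set.Iic a, f u) (∫ u, f u) (i + 1) -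
      cum y (fun a => ∫ u in Set.Iic a, f u) (∫ u, f u) i := by
  rw [← cumT_int, ← cumT_int]
  have hae : ∀ᵐ u : ℝ, ∀ k, y k ≠ u := by
    rw [ae_all_iff]
    intro k
    filter_upwards [Measure.ae_ne volume (y k)] with u hu using hu.symm
  have hi : (i : ℕ) ≤ n := Nat.le_of_lt_succ i.2
  have hset : ({u : ℝ | StrictMono (i.insertNth u y : Fin (n + 1) → ℝ)} : Set ℝ)
      =ᵐ[volume] (cumT y (i + 1) \ cumT y i : Set ℝ) := by
    filter_upwards [hae] with u hu
    apply propext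
    change StrictMono _ ↔ (u ∈ cumT y (i + 1) ∧ ¬ u ∈ cumT y i)
    rw [ins_iff y hy, mem_cumT y hy u _ hi, mem_cumT' y hy u hu, not_not, and_comm]
  have hsub : (cumT y i : Set ℝ) ≤ᵐ[volume] cumT y (i + 1) := by
    filter_upwards [hae] with u hu
    change u ∈ cumT y i → u ∈ cumT y (i + 1)
    rw [mem_cumT y hy u _ hi, mem_cumT' y hy u hu]
    intro h k hk
    by_contra hc
    apply h
    intro l hl
    have hlk : y l < y k := hy (Fin.lt_def.2 (hl.trans_le hk))
    exact hlk.trans_le (not_lt.1 hc)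
  rw [setIntegral_congr_set hset]
  rw [eq_sub_iff_add_eq, ← setIntegral_union disjoint_sdiff_self_left (cumT_meas _ _)
    hf.integrableOn hf.integrableOn]
  apply setIntegral_congr_set
  filter_upwards [hsub] with u hu
  apply propext
  change ((u ∈ cumT y (i + 1) ∧ ¬ u ∈ cumT y i) ∨ u ∈ cumT y i) ↔ u ∈ cumT y (i + 1)
  have hu' : u ∈ cumT y i → u ∈ cumT y (i + 1) := hu
  tauto

lemma slice_sum {n : ℕ} (y : Fin n → ℝ) (hy : StrictMono y) (f : ℝ → ℝ) (hf : Integrable f) :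
    ∑ i : Fin (n + 1), ∫ u in {u : ℝ | StrictMono (i.insertNth u y : Fin (n + 1) → ℝ)}, f u =
      ∫ u, f u := by
  simp_rw [slice_int y hy f hf]
  set g := cum y (fun a => ∫ u in Set.Iic a, f u) (∫ u, f u) with hg
  rw [Fin.sum_univ_eq_sum_range (fun i => g (i + 1) - g i) (n + 1), Finset.sum_range_sub]
  simp [hg, cum]

lemma alt_sum (g : ℕ → ℝ) (m : ℕ) :
    ∑ i ∈ Finset.range m, (-1 : ℝ) ^ i * (g (i + 1) - g i) =
      2 * ∑ i ∈ Finset.range m, (-1 : ℝ) ^ i * g (i + 1) + (-1) ^ m * g m - g 0 := by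
  induction m with
  | zero => simp
  | succ m ih => rw [Finset.sum_range_succ, Finset.sum_range_succ, ih]; ring

lemma slice_alt {n : ℕ} (y : Fin n → ℝ) (hy : StrictMono y) (f : ℝ → ℝ) (hf : Integrable f)
    (h0 : ∫ u, f u = 0) :
    ∑ i : Fin (n + 1), (-1 : ℝ) ^ (i : ℕ) *
      ∫ u in {u : ℝ | StrictMono (i.insertNth u y : Fin (n + 1) → ℝ)}, f u =
      2 * ∑ k : Fin n, (-1 : ℝ) ^ (k : ℕ) * ∫ u in Set.Iic (y k), f u := by
  simp_rw [slice_int y hy f hf]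
  set g := cum y (fun a => ∫ u in Set.Iic a, f u) (∫ u, f u) with hg
  rw [Fin.sum_univ_eq_sum_range (fun i => (-1 : ℝ) ^ i * (g (i + 1) - g i)) (n + 1), alt_sum,
    Finset.sum_range_succ]
  have h1 : g (n + 1) = 0 := by simp [hg, cum, h0]
  have h2 : g 0 = 0 := by simp [hg, cum]
  rw [h1, h2, ← Fin.sum_univ_eq_sum_range (fun i => (-1 : ℝ) ^ i * g (i + 1)) n]
  simp [hg, cum]

lemma insertNth_meas {n : ℕ} (i : Fin (n + 1)) :
    Measurable (fun z : ℝ × (Fin n → ℝ) => (i.insertNth z.1 z.2 : Fin (n + 1) → ℝ)) :=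
  (MeasurableEquiv.piFinSuccAbove (fun _ : Fin (n + 1) => ℝ) i).symm.measurable

lemma slice_integrable {n : ℕ} (i : Fin (n + 1)) (f : ℝ → ℝ) (g : (Fin n → ℝ) → ℝ)
    (hf : Integrable f) (hg : Integrable g) :
    IntegrableOn (fun y => (∫ u in {u : ℝ | StrictMono (i.insertNth u y : Fin (n + 1) → ℝ)}, f u)
      * g y) {y : Fin n → ℝ | StrictMono y} := by
  have h1 : MeasurableSet {z : ℝ × (Fin n → ℝ) | StrictMono (i.insertNth z.1 z.2 : Fin (n + 1) → ℝ)} :=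
    insertNth_meas i (measW _)
  have h2 := ((hf.mul_prod hg).indicator h1).integral_prod_right
  refine (h2.congr (Filter.Eventually.of_forall fun y => ?_)).integrableOn
  simp only
  rw [← integral_mul_const, ← integral_indicator]
  · rfl
  · exact (measurable_id'.prodMk measurable_const) h1

noncomputable def DD {n : ℕ} (φ : Fin n → ℝ → ℝ) (x : Fin n → ℝ) : ℝ :=
  (Matrix.of fun i j => φ j (x i)).det

lemma DD_int {n : ℕ} (φ : Fin n → ℝ → ℝ) (hφ : ∀ j, Integrable (φ j)) : Integrable (DD φ) := by
  unfold DD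
  simp only [← Matrix.det_transpose (Matrix.of _)]
  simp only [Matrix.det_apply, Matrix.transpose_apply, Matrix.of_apply]
  refine integrable_finsetSum _ fun σ _ => ?_
  exact (Integrable.fintype_prod (f := fun i => φ (σ i)) (fun i => hφ _)).smul _

lemma DD_row {n : ℕ} (φ : Fin (n + 1) → ℝ → ℝ) (x : Fin (n + 1) → ℝ) (k : Fin (n + 1)) :
    DD φ x = ∑ j : Fin (n + 1), (-1 : ℝ) ^ (k + j : ℕ) * φ j (x k) *
      DD (fun l => φ (j.succAbove l)) (fun l => x (k.succAbove l)) := by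
  unfold DD
  rw [Matrix.det_succ_row _ k]
  rfl

lemma DD_col {n : ℕ} (φ : Fin (n + 1) → ℝ → ℝ) (x : Fin (n + 1) → ℝ) :
    DD φ x = ∑ i : Fin (n + 1), (-1 : ℝ) ^ (i + n : ℕ) * φ (Fin.last n) (x i) *
      DD (fun l => φ l.castSucc) (fun l => x (i.succAbove l)) := by
  unfold DD
  rw [Matrix.det_succ_column _ (Fin.last n)]
  simp only [Fin.val_last, Fin.succAbove_last]
  rfl

lemma step1 {n : ℕ} (φ : Fin (n + 1) → ℝ → ℝ) (hφ : ∀ j, Integrable (φ j)) (G : ℝ → ℝ)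
    (h0 : ∫ u, φ (Fin.last n) u = 0) (hG : ∀ a, ∫ u in Set.Iic a, φ (Fin.last n) u = G a)
    (hGi : ∀ k : Fin n, Integrable fun y => G (y k) * DD (fun l => φ l.castSucc) y) :
    ∫ x in {x : Fin (n + 1) → ℝ | StrictMono x}, DD φ x =
      (-1) ^ n * 2 * ∑ k : Fin n, (-1 : ℝ) ^ (k : ℕ) *
        ∫ y in {y : Fin n → ℝ | StrictMono y}, G (y k) * DD (fun l => φ l.castSucc) y := by
  have hD : Integrable (DD (fun l : Fin n => φ l.castSucc)) := DD_int _ fun j => hφ _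
  simp_rw [DD_col φ, mul_assoc]
  rw [integral_finsetSum _ fun i _ =>
    ((integrable_slice i _ _ (hφ (Fin.last n)) hD).integrableOn.const_mul _)]
  simp_rw [integral_const_mul]
  simp_rw [slice _ _ _ (hφ (Fin.last n)) hD]
  simp_rw [← integral_const_mul]
  rw [← integral_finsetSum, ← integral_finsetSum, ← integral_const_mul, ← integral_const_mul]
  · refine setIntegral_congr_fun (measW n) fun y hy => ?_
    have h := slice_alt y hy _ (hφ (Fin.last n)) h0
    simp_rw [hG] at h
    simp only [pow_add, mul_comm _ ((-1 : ℝ) ^ n), mul_assoc]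
    rw [← Finset.mul_sum]
    congr 1
    simp only [← mul_assoc]
    rw [← Finset.sum_mul, h, ← Finset.sum_mul, mul_assoc]
  · intro k _
    exact (hGi k).integrableOn.const_mul _
  · intro i _
    refine Integrable.const_mul ?_ _
    -- bounded by slices
    have hcongr : ∀ y ∈ {y : Fin n → ℝ | StrictMono y},
        (cum y G 0 (i + 1) - cum y G 0 i) * DD (fun l => φ l.castSucc) y =
        (∫ u in {u : ℝ | StrictMono (i.insertNth u y : Fin (n + 1) → ℝ)}, φ (Fin.last n) u) *
          DD (fun l => φ l.castSucc) y := by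
      intro y hy
      rw [slice_int y hy _ (hφ _), h0]
      simp_rw [hG]
    refine (integrableOn_congr_fun hcongr (measW n)).1 ?_
    have hc : ∀ m, Integrable fun y : Fin n → ℝ => cum y G 0 m * DD (fun l => φ l.castSucc) y := by
      intro m
      cases m with
      | zero => simp [cum]
      | succ m =>
        by_cases hm : m < n
        · simpa [cum, hm] using hGi ⟨m, hm⟩
        · simp [cum, hm]
    simp only [sub_mul]
    exact ((hc _).sub (hc _)).integrableOn

lemma GDD_int {n : ℕ} (φ : Fin n → ℝ → ℝ) (hφ : ∀ j, Integrable (φ j)) (G : ℝ → ℝ)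
    (hG : ∀ j, Integrable (fun u => G u * φ j u)) (k : Fin n) :
    Integrable fun y => G (y k) * DD φ y := by
  cases n with
  | zero => exact k.elim0
  | succ n =>
    simp_rw [DD_row φ _ k, Finset.mul_sum]
    refine integrable_finsetSum _ fun j _ => ?_
    have := (integrable_slice k _ _ (hG j)
      (DD_int (fun l => φ (j.succAbove l)) fun l => hφ _)).const_mul ((-1) ^ (k + j : ℕ))
    refine this.congr (Filter.Eventually.of_forall fun z => ?_)
    simp only
    ring

lemma step2 {n : ℕ} (φ : Fin (n + 1) → ℝ → ℝ) (hφ : ∀ j, Integrable (φ j)) (G : ℝ → ℝ)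
    (hG : ∀ j, Integrable (fun u => G u * φ j u))
    (h0 : ∀ j, j ≠ Fin.last n → ∫ u, G u * φ j u = 0) :
    ∑ k : Fin (n + 1), (-1 : ℝ) ^ (k : ℕ) *
        ∫ y in {y : Fin (n + 1) → ℝ | StrictMono y}, G (y k) * DD φ y =
    (-1) ^ n * (∫ u, G u * φ (Fin.last n) u) *
      ∫ z in {z : Fin n → ℝ | StrictMono z}, DD (fun l => φ l.castSucc) z := by
  have hD : ∀ j : Fin (n + 1), Integrable (DD (fun l : Fin n => φ (j.succAbove l))) :=
    fun j => DD_int _ fun l => hφ _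
  have key : ∀ k : Fin (n + 1), (-1 : ℝ) ^ (k : ℕ) *
        ∫ y in {y : Fin (n + 1) → ℝ | StrictMono y}, G (y k) * DD φ y =
      ∑ j : Fin (n + 1), (-1 : ℝ) ^ (j : ℕ) *
        ∫ z in {z : Fin n → ℝ | StrictMono z},
          (∫ u in {u : ℝ | StrictMono (k.insertNth u z : Fin (n + 1) → ℝ)}, G u * φ j u) *
            DD (fun l => φ (j.succAbove l)) z := by
    intro k
    have e : ∀ y, G (y k) * DD φ y = ∑ j : Fin (n + 1), (-1 : ℝ) ^ (k + j : ℕ) *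
        ((G (y k) * φ j (y k)) *
          DD (fun l => φ (j.succAbove l)) (fun l => y (k.succAbove l))) := by
      intro y
      rw [DD_row φ y k, Finset.mul_sum]
      refine Finset.sum_congr rfl fun j _ => ?_
      ring
    simp_rw [e]
    rw [integral_finsetSum _ fun j _ =>
      ((integrable_slice k _ _ (hG j) (hD j)).integrableOn.const_mul _), Finset.mul_sum]
    refine Finset.sum_congr rfl fun j _ => ?_
    rw [integral_const_mul, slice k _ _ (hG j) (hD j), ← mul_assoc, pow_add, ← mul_assoc,
      ← mul_pow]
    simp
  rw [Finset.sum_congr rfl fun k _ => key k, Finset.sum_comm]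
  have key2 : ∀ j : Fin (n + 1), ∑ k : Fin (n + 1), (-1 : ℝ) ^ (j : ℕ) *
        ∫ z in {z : Fin n → ℝ | StrictMono z},
          (∫ u in {u : ℝ | StrictMono (k.insertNth u z : Fin (n + 1) → ℝ)}, G u * φ j u) *
            DD (fun l => φ (j.succAbove l)) z =
      (-1 : ℝ) ^ (j : ℕ) * ((∫ u, G u * φ j u) *
        ∫ z in {z : Fin n → ℝ | StrictMono z}, DD (fun l => φ (j.succAbove l)) z) := by
    intro j
    rw [← Finset.mul_sum, ← integral_finsetSum]
    · congr 1
      rw [← integral_const_mul]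
      refine setIntegral_congr_fun (measW n) fun z hz => ?_
      rw [← Finset.sum_mul, slice_sum z hz _ (hG j)]
    · intro k _
      refine slice_integrable k _ _ (hG j) (hD j)
  rw [Finset.sum_congr rfl fun j _ => key2 j, Finset.sum_eq_single (Fin.last n)]
  · simp only [Fin.val_last, Fin.succAbove_last]
    ring
  · intro j _ hj
    rw [h0 j hj]; simp
  · simp

lemma DD_vdm {N : ℕ} (t : ℝ) (q : Fin N → Polynomial ℝ) (hm : ∀ i, (q i).Monic)
    (hd : ∀ i, (q i).natDegree = i) (x : Fin N → ℝ) :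
    DD (fun j u => (q j).eval u * gw (1 / (2 * t)) u) x =
      Real.exp (-(∑ j, x j ^ 2) / (2 * t)) * vandermonde N x := by
  have h1 := Matrix.det_mul_column (fun i => gw (1 / (2 * t)) (x i))
    (Matrix.of fun i j => (q j).eval (x i))
  rw [← Matrix.det_eval_matrixOfPolynomials_eq_det_vandermonde x q hd hm,
    Matrix.det_vandermonde] at h1
  unfold DD vandermonde
  convert h1 using 2
  · ext i j
    simp [mul_comm]
  · simp only [gw]
    rw [← Real.exp_sum, ← Finset.mul_sum]
    congr 1
    ring

noncomputable def KK (N : ℕ) (t : ℝ) : ℝ := ∫ x in {x : Fin N → ℝ | StrictMono x},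
        Real.exp (-(∑ j, x j ^ 2) / (2 * t)) * vandermonde N x

lemma gw_mul (t x : ℝ) : gw (1 / (2 * t)) x * gw (1 / (2 * t)) x = gw (1 / t) x := by
  simp only [gw, ← Real.exp_add]
  congr 1
  ring

lemma KK_rec {t : ℝ} (ht : 0 < t) (n : ℕ) :
    KK (n + 2) t = 2 * t * ((t / 2) ^ n * n.factorial * √(π * t)) * KK n t := by
  have hb : 0 < 1 / (2 * t) := by positivity
  have hb' : 0 < 1 / t := by positivity
  let r : Polynomial ℝ := Polynomial.X * hP t n - Polynomial.C t * Polynomial.derivative (hP t n)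
  let q : Fin (n + 2) → Polynomial ℝ := fun j => if (j : ℕ) = n + 1 then r else hP t j
  have hr := monic_aux n t (hP t n) (hP_monic t n).1 (hP_monic t n).2
  have hq : ∀ j, (q j).Monic ∧ (q j).natDegree = j := by
    intro j
    by_cases hj : (j : ℕ) = n + 1
    · simp only [q, hj, if_true]
      exact hr
    · simp only [q, hj, if_false]
      exact hP_monic t j
  let φ : Fin (n + 2) → ℝ → ℝ := fun j u => (q j).eval u * gw (1 / (2 * t)) u
  have hφ : ∀ j, Integrable (φ j) := fun j => gw_int hb _
  let p : Polynomial ℝ := Polynomial.C (-t) * hP t n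
  let G : ℝ → ℝ := fun u => p.eval u * gw (1 / (2 * t)) u
  have hrp : r = Polynomial.derivative p -
      Polynomial.C (2 * (1 / (2 * t))) * Polynomial.X * p := by
    have hcc : 2 * (1 / (2 * t)) * (-t) = -1 := by field_simp
    have : Polynomial.C (2 * (1 / (2 * t))) * Polynomial.X * p =
        Polynomial.C (2 * (1 / (2 * t)) * (-t)) * (Polynomial.X * hP t n) := by
      simp only [p, Polynomial.C_mul]; ring
    rw [this, hcc]
    simp [r, p]
    ring
  have hlast : φ (Fin.last (n + 1)) = fun u => (Polynomial.derivative p -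
      Polynomial.C (2 * (1 / (2 * t))) * Polynomial.X * p).eval u * gw (1 / (2 * t)) u := by
    rw [← hrp]
    simp [φ, q]
  have hcast : ∀ j : Fin (n + 1), φ j.castSucc = fun u => (hP t j).eval u * gw (1 / (2 * t)) u := by
    intro j
    have : (j : ℕ) ≠ n + 1 := by omega
    simp [φ, q, this]
  have hGφ : ∀ j : Fin (n + 1), (fun u => G u * φ j.castSucc u) =
      fun u => -t * ((hP t j * hP t n).eval u * gw (1 / t) u) := by
    intro j
    ext u
    rw [hcast, ← gw_mul]
    simp [G, p]
    ring
  have hGi : ∀ j : Fin (n + 1), Integrable (fun u => G u * φ j.castSucc u) := by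
    intro j
    rw [hGφ]
    exact (gw_int hb' _).const_mul _
  have hGv : ∀ j : Fin (n + 1), ∫ u, G u * φ j.castSucc u =
      -t * ((t / 2) ^ n * n.factorial * √(π * t) * (hP t j).coeff n) := by
    intro j
    rw [hGφ, integral_const_mul, hP_orth ht n (hP t j)]
    rw [(hP_monic t j).2]
    omega
  have s1 := step1 φ hφ G (by rw [hlast]; exact gw_integral_deriv hb p)
    (by intro a; rw [hlast]; exact gw_integral_Iic hb p a)
    (GDD_int _ (fun j => hφ _) G hGi)
  have s2 := step2 (fun l : Fin (n + 1) => φ l.castSucc) (fun j => hφ _) G hGi (by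
    intro j hj
    rw [hGv, Polynomial.coeff_eq_zero_of_natDegree_lt]
    · simp
    · rw [(hP_monic t j).2]
      have : (j : ℕ) ≠ n := fun h => hj (Fin.ext h)
      omega)
  have hone : (hP t n).coeff n = 1 := by
    have := (hP_monic t n).1.coeff_natDegree
    rwa [(hP_monic t n).2] at this
  rw [s2, hGv, Fin.val_last, hone] at s1
  have e1 : KK (n + 2) t = ∫ x in {x : Fin (n + 2) → ℝ | StrictMono x}, DD φ x := by
    unfold KK
    congr 1
    ext x
    exact (DD_vdm t q (fun i => (hq i).1) (fun i => (hq i).2) x).symm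
  have e2 : KK n t = ∫ z in {z : Fin n → ℝ | StrictMono z},
      DD (fun l : Fin n => φ l.castSucc.castSucc) z := by
    unfold KK
    congr 1
    ext x
    rw [← DD_vdm t (fun i : Fin n => hP t i) (fun i => (hP_monic t i).1)
      (fun i => (hP_monic t i).2) x]
    congr 1
    ext l u
    rw [hcast]
    simp
  rw [e1, e2, s1]
  have hs : ((-1 : ℝ) ^ n) * (-1) ^ n = 1 := by rw [← mul_pow]; simp
  rw [pow_succ]
  linear_combination (2 * t * ((t / 2) ^ n * n.factorial * √(π * t)) *
    ∫ z in {z : Fin n → ℝ | StrictMono z}, DD (fun l : Fin n => φ l.castSucc.castSucc) z) * hs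

lemma KK_zero (t : ℝ) : KK 0 t = 1 := by
  unfold KK
  have : {x : Fin 0 → ℝ | StrictMono x} = Set.univ := by
    ext x; simp [Subsingleton.strictMono]
  rw [this]
  simp [vandermonde, Measure.real, volume_pi, Measure.pi_of_empty]

lemma KK_one (t : ℝ) : KK 1 t = √(2 * π * t) := by
  unfold KK
  have : {x : Fin 1 → ℝ | StrictMono x} = Set.univ := by
    ext x; simp [Subsingleton.strictMono]
  rw [this, setIntegral_univ]
  have h := (volume_preserving_funUnique (Fin 1) ℝ).integral_comp
    (MeasurableEquiv.measurableEmbedding _) (gw (1 / (2 * t)))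
  have h2 : ∫ x, gw (1 / (2 * t)) x = √(2 * π * t) := by
    simp only [gw]
    rw [integral_gaussian]
    congr 1
    rw [div_div_eq_mul_div]
    ring
  rw [← h2, ← h]
  congr 1
  ext x
  have : (MeasurableEquiv.funUnique (Fin 1) ℝ) x = x 0 := rfl
  rw [this]
  simp [vandermonde, gw]
  ring

/-- The claimed value. -/
noncomputable def RR (N : ℕ) (t : ℝ) : ℝ :=
  ((2 : ℝ) ^ ((N : ℝ) / 2) * ∏ j ∈ Finset.range N, Real.Gamma (((j : ℝ) + 1) / 2)) *
        t ^ ((N : ℝ) * ((N : ℝ) + 1) / 4)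

lemma RR_rec {t : ℝ} (ht : 0 < t) (n : ℕ) :
    RR (n + 2) t = 2 * t * ((t / 2) ^ n * n.factorial * √(π * t)) * RR n t := by
  unfold RR
  rw [Finset.prod_range_succ, Finset.prod_range_succ]
  have hG : Real.Gamma (((n : ℝ) + 1) / 2) * Real.Gamma ((((n + 1 : ℕ) : ℝ) + 1) / 2) =
      n.factorial * (2 ^ n)⁻¹ * √π := by
    have h := Real.Gamma_mul_Gamma_add_half (((n : ℝ) + 1) / 2)
    have e1 : ((n : ℝ) + 1) / 2 + 1 / 2 = (((n + 1 : ℕ) : ℝ) + 1) / 2 := by push_cast; ring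
    have e2 : 2 * (((n : ℝ) + 1) / 2) = n + 1 := by ring
    rw [e1, e2, Real.Gamma_nat_eq_factorial] at h
    rw [h]
    have : (1 : ℝ) - (n + 1) = -(n : ℝ) := by ring
    rw [this, Real.rpow_neg (by norm_num), Real.rpow_natCast]
  have h2 : (2 : ℝ) ^ (((n + 2 : ℕ) : ℝ) / 2) = 2 * 2 ^ ((n : ℝ) / 2) := by
    rw [show ((n + 2 : ℕ) : ℝ) / 2 = 1 + (n : ℝ) / 2 by push_cast; ring,
      Real.rpow_add (by norm_num), Real.rpow_one]
  have h3 : t ^ (((n + 2 : ℕ) : ℝ) * (((n + 2 : ℕ) : ℝ) + 1) / 4) =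
      t * t ^ n * √t * t ^ ((n : ℝ) * ((n : ℝ) + 1) / 4) := by
    rw [show ((n + 2 : ℕ) : ℝ) * (((n + 2 : ℕ) : ℝ) + 1) / 4 =
      1 + n + 1 / 2 + (n : ℝ) * ((n : ℝ) + 1) / 4 by push_cast; ring,
      Real.rpow_add ht, Real.rpow_add ht, Real.rpow_add ht, Real.rpow_one, Real.rpow_natCast,
      Real.sqrt_eq_rpow]
  rw [h2, h3, mul_assoc (∏ x ∈ Finset.range n, _), hG, Real.sqrt_mul Real.pi_pos.le, div_pow]
  ring

lemma KK_eq {t : ℝ} (ht : 0 < t) : ∀ n : ℕ, KK n t = RR n t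
  | 0 => by rw [KK_zero]; simp [RR]
  | 1 => by
    rw [KK_one, Real.sqrt_mul (by positivity), Real.sqrt_mul (by positivity)]
    have e : (1 : ℝ) * (1 + 1) / 4 = 1 / 2 := by norm_num
    simp only [RR, Nat.cast_one, Finset.prod_range_one, Nat.cast_zero, zero_add, e,
      Real.Gamma_one_half_eq, Real.sqrt_eq_rpow]
  | n + 2 => by rw [KK_rec ht, RR_rec ht, KK_eq ht n]

/-- Selberg-type Gaussian integral over the Weyl chamber with the Vandermonde
to the first power. -/
theorem gaussian_vandermonde_integral (N : ℕ) (t : ℝ) (ht : 0 < t) :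
    ∫ x in {x : Fin N → ℝ | StrictMono x},
        Real.exp (-(∑ j, x j ^ 2) / (2 * t)) * vandermonde N x =
      ((2 : ℝ) ^ ((N : ℝ) / 2) * ∏ j ∈ Finset.range N, Real.Gamma (((j : ℝ) + 1) / 2)) *
        t ^ ((N : ℝ) * ((N : ℝ) + 1) / 4) :=
  KK_eq ht N
end

section
/- Heat semigroup of the Airy Hamiltonian: for t > 0 and x, y ∈ ℝ, ∫_ℝ Ai(x-λ) Ai(y-λ) e^{-λt} dλ = (4πt)^{-1/2} exp(-(x-y)²/(4t) - t(x+y)/2 + t³/12). -/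
open Real MeasureTheory Filter

namespace AiryAux
open Complex

noncomputable def E (x : ℝ) (z : ℂ) : ℂ := cexp (I * (z ^ 3 / 3 + x * z))

lemma E_diff (x : ℝ) : Differentiable ℂ (E x) := by unfold E; fun_prop

lemma norm_E (x k η : ℝ) : ‖E x (k + η * I)‖ = rexp (-η * k ^ 2 + (η ^ 3 / 3 - x * η)) := by
  rw [E, Complex.norm_exp]
  congr 1
  have : I * ((k + η * I) ^ 3 / 3 + x * (k + η * I)) =
      ((-η * k ^ 2 + (η ^ 3 / 3 - x * η) : ℝ) : ℂ) + ((k ^ 3 / 3 - k * η ^ 2 + x * k : ℝ) : ℂ) * I := by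
    push_cast
    linear_combination (k ^ 2 * η + x * η + k * η ^ 2 * I + η ^ 3 / 3 * (I ^ 2 - 1)) * I_sq
  rw [this]
  simp [-ofReal_add, -ofReal_sub, -ofReal_mul]

lemma cont_f (x s : ℝ) : Continuous (fun k : ℝ => E x (k + s * I)) :=
  (E_diff x).continuous.comp (by fun_prop)

lemma int_pow (x s : ℝ) (hs : 0 < s) (n : ℕ) :
    Integrable (fun k : ℝ => (k : ℂ) ^ n * E x (k + s * I)) := by
  have h := (integrable_rpow_mul_exp_neg_mul_sq hs (s := (n : ℝ)) (by
    have : (0 : ℝ) ≤ n := n.cast_nonneg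
    linarith)).norm.mul_const (rexp (s ^ 3 / 3 - x * s))
  refine h.mono' (Continuous.aestronglyMeasurable ?_) (ae_of_all _ fun k => ?_)
  · exact (by fun_prop : Continuous (fun k : ℝ => (k : ℂ) ^ n)).mul (cont_f x s)
  · rw [norm_mul, norm_E, Real.exp_add]
    simp [mul_assoc]

lemma int_poly (x s : ℝ) (hs : 0 < s) (p : Polynomial ℂ) :
    Integrable (fun k : ℝ => p.eval (k : ℂ) * E x (k + s * I)) := by
  induction p using Polynomial.induction_on' with
  | add p q hp hq => 
    refine (hp.add hq).congr (ae_of_all _ fun k => ?_)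
    simp [add_mul]
  | monomial n a => simpa [mul_assoc] using (int_pow x s hs n).const_mul a

lemma hasDeriv_E (x s k : ℝ) : HasDerivAt (fun k : ℝ => E x (k + s * I))
    (I * ((k + s * I) ^ 2 + x) * E x (k + s * I)) k := by
  have h1 : HasDerivAt (fun k : ℝ => (k : ℂ) + s * I) 1 k := by
    simpa using (Complex.ofRealCLM.hasDerivAt (x := k)).add_const (s * I : ℂ)
  have h2 := ((((h1.pow 3).div_const 3).add (h1.const_mul (x : ℂ))).const_mul I).cexp
  unfold E
  refine h2.congr_deriv ?_
  simp only [Pi.add_apply, Pi.pow_apply]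
  push_cast
  ring

lemma int_f (x s : ℝ) (hs : 0 < s) : Integrable (fun k : ℝ => E x (k + s * I)) := by
  simpa using int_pow x s hs 0

open FourierTransform in
lemma int_fourier (x s : ℝ) (hs : 0 < s) :
    Integrable (𝓕 (fun k : ℝ => E x (k + s * I))) := by
  set f : ℝ → ℂ := fun k : ℝ => E x (k + s * I) with hf
  have d1 : deriv f = fun k : ℝ => (I * ((k + s * I) ^ 2 + x)) * f k :=
    funext fun k => (hasDeriv_E x s k).deriv
  have hd1 : ∀ k, HasDerivAt (deriv f)
      ((I * (2 * (k + s * I)) + (I * ((k + s * I) ^ 2 + x)) ^ 2) * f k) k := by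
    intro k
    have h1 : HasDerivAt (fun k : ℝ => (k : ℂ) + s * I) 1 k := by
      simpa using (Complex.ofRealCLM.hasDerivAt (x := k)).add_const (s * I : ℂ)
    rw [d1]
    have := (((h1.pow 2).add_const (x : ℂ)).const_mul I).mul (hasDeriv_E x s k)
    refine this.congr_deriv ?_
    simp only [hf, Pi.pow_apply]
    push_cast
    ring
  have i0 : Integrable f := int_f x s hs
  have i1 : Integrable (deriv f) := by
    rw [d1]
    have := int_poly x s hs
      (.C I * ((.X + .C (s * I)) ^ 2 + .C (x : ℂ)))
    simpa using this
  have i2 : Integrable (deriv (deriv f)) := by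
    rw [funext fun k => (hd1 k).deriv]
    have := int_poly x s hs
      (.C I * (.C 2 * (.X + .C (s * I))) + (.C I * ((.X + .C (s * I)) ^ 2 + .C (x : ℂ))) ^ 2)
    simpa using this
  have e1 := Real.fourier_deriv i0 (fun k => (hasDeriv_E x s k).differentiableAt) i1
  have e2 := Real.fourier_deriv i1 (fun k => (hd1 k).differentiableAt) i2
  have b0 : ∀ w, ‖𝓕 f w‖ ≤ ∫ v, ‖f v‖ := fun w => VectorFourier.norm_fourierIntegral_le_integral_norm _ _ _ _ _
  have b2 : ∀ w, ‖𝓕 (deriv (deriv f)) w‖ ≤ ∫ v, ‖deriv (deriv f) v‖ := fun w => VectorFourier.norm_fourierIntegral_le_integral_norm _ _ _ _ _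
  have hc : Continuous (𝓕 f) := VectorFourier.fourierIntegral_continuous Real.continuous_fourierChar continuous_inner i0
  refine (integrable_inv_one_add_sq.const_mul ((∫ v, ‖f v‖) + ∫ v, ‖deriv (deriv f) v‖)).mono'
    hc.aestronglyMeasurable (ae_of_all _ fun w => ?_)
  have h2 := b2 w
  rw [e2, e1] at h2
  have : ‖(2 * π * I * w : ℂ) • ((2 * π * I * w : ℂ) • 𝓕 f w)‖ = (2 * π) ^ 2 * w ^ 2 * ‖𝓕 f w‖ := by
    simp [abs_of_pos Real.pi_pos]
    rw [← sq_abs w]; ring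
  rw [this] at h2
  rw [← div_eq_mul_inv, le_div_iff₀ (by positivity)]
  have hp : (1 : ℝ) ≤ (2 * π) ^ 2 := by nlinarith [Real.pi_gt_three]
  have := b0 w
  have h3 : 0 ≤ w ^ 2 * ‖𝓕 f w‖ := by positivity
  nlinarith

open FourierTransform in
lemma parseval (x y s : ℝ) (hs : 0 < s) :
    ∫ w, 𝓕 (fun k : ℝ => E x (k + s * I)) w * 𝓕 (fun k : ℝ => E y (k + s * I)) w
      = ∫ k : ℝ, E x (k + s * I) * E y ((-k : ℝ) + s * I) := by
  have h : ∫ w, 𝓕 (fun k : ℝ => E x (k + s * I)) w • 𝓕 (fun k : ℝ => E y (k + s * I)) w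
    = ∫ w, (fun k : ℝ => E x (k + s * I)) w • 𝓕 (𝓕 (fun k : ℝ => E y (k + s * I))) w := by
    simpa using! (VectorFourier.integral_fourierIntegral_smul_eq_flip (L := innerₗ ℝ)
      Real.continuous_fourierChar continuous_inner (int_f x s hs) (int_fourier y s hs))
  simp only [smul_eq_mul] at h
  rw [h]
  congr 1
  ext k
  congr 1
  have := congrFun ((cont_f y s).fourierInv_fourier_eq (int_f y s hs) (int_fourier y s hs)) (-k)
  rw [Real.fourierInv_eq_fourier_neg, neg_neg] at this
  exact this

lemma vert (x s : ℝ) (ε : ℝ) (hε : ε ^ 2 = 1) (hs : 0 < s) :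
    Tendsto (fun R : ℝ => ∫ η in (0 : ℝ)..s, E x ((ε * R : ℝ) + η * I)) atTop (nhds 0) := by
  have : (0 : ℂ) = ∫ η in (0 : ℝ)..s, (0 : ℂ) := by simp
  rw [this]
  refine intervalIntegral.tendsto_integral_filter_of_dominated_convergence
    (fun η => rexp (η ^ 3 / 3 - x * η)) ?_ ?_ ?_ ?_
  · refine Eventually.of_forall fun R => Continuous.aestronglyMeasurable ?_
    exact (E_diff x).continuous.comp (by fun_prop)
  · refine Eventually.of_forall fun R => ae_of_all _ fun η hη => ?_
    rw [Set.uIoc_of_le hs.le] at hη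
    rw [norm_E]
    apply Real.exp_le_exp.2
    nlinarith [mul_nonneg hη.1.le (sq_nonneg (ε * R))]
  · exact Continuous.intervalIntegrable (by fun_prop) _ _
  · refine ae_of_all _ fun η hη => ?_
    rw [Set.uIoc_of_le hs.le] at hη
    rw [tendsto_zero_iff_norm_tendsto_zero]
    simp_rw [norm_E]
    refine Real.tendsto_exp_atBot.comp (tendsto_atBot_add_const_right _ _ ?_)
    simp_rw [mul_pow, hε, one_mul]
    exact (tendsto_pow_atTop two_ne_zero).const_mul_atTop_of_neg (by linarith [hη.1])

lemma cos_eq (x R : ℝ) : ∫ k in (-R)..R, E x k =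
    2 * ((∫ k in (0 : ℝ)..R, Real.cos (k ^ 3 / 3 + x * k) : ℝ) : ℂ) := by
  have hc : Continuous (fun k : ℝ => E x k) := (E_diff x).continuous.comp (by fun_prop)
  rw [← intervalIntegral.integral_add_adjacent_intervals (b := 0)
    (hc.intervalIntegrable _ _) (hc.intervalIntegrable _ _)]
  have h1 : ∫ k in (-R)..0, E x k = ∫ k in (0 : ℝ)..R, E x ((-k : ℝ)) := by
    rw [intervalIntegral.integral_comp_neg (fun k : ℝ => E x k)]; simp
  have hc' : Continuous (fun k : ℝ => E x ((-k : ℝ))) := (E_diff x).continuous.comp (by fun_prop)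
  rw [h1, ← intervalIntegral.integral_add
    (hc'.intervalIntegrable _ _) (hc.intervalIntegrable _ _), ← intervalIntegral.integral_ofReal,
    ← intervalIntegral.integral_const_mul]
  congr 1
  ext k
  push_cast
  rw [Complex.cos, E, E]
  have e1 : I * ((-(k : ℂ)) ^ 3 / 3 + x * -k) = -(k ^ 3 / 3 + x * k) * I := by ring
  have e2 : I * ((k : ℂ) ^ 3 / 3 + x * k) = (k ^ 3 / 3 + x * k) * I := by ring
  rw [e1, e2]; ring

lemma airy_eq (Ai : ℝ → ℝ)
    (hAi : ∀ x : ℝ, Tendsto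
      (fun R : ℝ => (1 / π) * ∫ k in (0 : ℝ)..R, Real.cos (k ^ 3 / 3 + x * k))
      atTop (nhds (Ai x))) (x s : ℝ) (hs : 0 < s) :
    ∫ k : ℝ, E x (k + s * I) = 2 * π * Ai x := by
  have h1 : Tendsto (fun R : ℝ => ∫ k in (-R)..R, E x k) atTop (nhds (2 * π * Ai x)) := by
    have := ((Complex.continuous_ofReal.tendsto _).comp (hAi x)).const_mul (2 * π : ℂ)
    refine this.congr fun R => ?_
    rw [cos_eq, Function.comp]
    push_cast
    have : (π : ℂ) ≠ 0 := by exact_mod_cast Real.pi_ne_zero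
    field_simp
  have h2 := intervalIntegral_tendsto_integral (int_f x s hs) tendsto_neg_atTop_atBot tendsto_id
  refine tendsto_nhds_unique h2 ?_
  have v1 := (vert x s 1 (by norm_num) hs).const_mul I
  have v2 := (vert x s (-1) (by norm_num) hs).const_mul I
  have := (h1.add v1).sub v2
  simp only [mul_zero, add_zero, sub_zero] at this
  refine this.congr fun R => ?_
  have c := Complex.integral_boundary_rect_eq_zero_of_differentiableOn (E x) (-R : ℝ) (R + s * I)
    (E_diff x).differentiableOn
  simp at c
  simp
  linear_combination c

open FourierTransform in
lemma fourier_f (Ai : ℝ → ℝ)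
    (hAi : ∀ x : ℝ, Tendsto
      (fun R : ℝ => (1 / π) * ∫ k in (0 : ℝ)..R, Real.cos (k ^ 3 / 3 + x * k))
      atTop (nhds (Ai x))) (x s : ℝ) (hs : 0 < s) (w : ℝ) :
    𝓕 (fun k : ℝ => E x (k + s * I)) w =
      ((2 * π * (Ai (x - 2 * π * w) * rexp (-(2 * π * w) * s)) : ℝ) : ℂ) := by
  rw [Real.fourier_real_eq_integral_exp_smul]
  push_cast
  rw [← mul_assoc, ← airy_eq Ai hAi _ s hs, ← integral_mul_const]
  congr 1
  ext k
  rw [smul_eq_mul, E, E, ← Complex.exp_add, ← Complex.exp_add]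
  congr 1
  push_cast
  linear_combination (2 * π * w * s) * I_sq

lemma rhs (x y s : ℝ) (hs : 0 < s) : ∫ k : ℝ, E x (k + s * I) * E y ((-k : ℝ) + s * I)
    = ((√(π / (2 * s)) * rexp (-(x - y) ^ 2 / (8 * s) - s * (x + y) + 2 * s ^ 3 / 3) : ℝ) : ℂ) := by
  have h := integral_cexp_quadratic (b := (-(2 * s) : ℝ)) (by simpa using hs) (I * (x - y))
    (2 * s ^ 3 / 3 - s * (x + y))
  have hs' : (s : ℂ) ≠ 0 := by exact_mod_cast hs.ne'
  have e : ((π / -((-(2 * s) : ℝ) : ℂ)) ^ (1 / 2 : ℂ)) = ((√(π / (2 * s)) : ℝ) : ℂ) := by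
    rw [Real.sqrt_eq_rpow, Complex.ofReal_cpow (by positivity)]
    push_cast; simp
  rw [e] at h
  push_cast at h ⊢
  convert h using 3
  · rename_i k
    rw [E, E, ← Complex.exp_add]
    congr 1
    linear_combination (2 * k ^ 2 * s + (x + y) * s + 2 * s ^ 3 / 3 * (I ^ 2 - 1)) * I_sq
  · field_simp
    linear_combination (-24 * (x - y) ^ 2 : ℂ) * I_sq

end AiryAux

theorem airy_heat_semigroup (Ai : ℝ → ℝ)
    (hAi : ∀ x : ℝ, Tendsto
      (fun R : ℝ => (1 / π) * ∫ k in (0 : ℝ)..R, Real.cos (k ^ 3 / 3 + x * k))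
      atTop (nhds (Ai x)))
    (t : ℝ) (ht : 0 < t) (x y : ℝ) :
    ∫ lam : ℝ, Ai (x - lam) * Ai (y - lam) * Real.exp (-lam * t) =
      (Real.sqrt (4 * π * t))⁻¹ *
        Real.exp (-(x - y) ^ 2 / (4 * t) - t * (x + y) / 2 + t ^ 3 / 12) := by
  have hs : 0 < t / 2 := by linarith
  have h := AiryAux.parseval x y (t / 2) hs
  rw [AiryAux.rhs x y _ hs] at h
  simp_rw [AiryAux.fourier_f Ai hAi _ _ hs, ← Complex.ofReal_mul] at h
  rw [integral_complex_ofReal] at h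
  have h := Complex.ofReal_injective h
  have hpi := Real.pi_pos
  have g := Measure.integral_comp_mul_left
    (fun lam : ℝ => Ai (x - lam) * Ai (y - lam) * Real.exp (-lam * t)) (2 * π)
  have e : ∀ w : ℝ, 2 * π * (Ai (x - 2 * π * w) * rexp (-(2 * π * w) * (t / 2))) *
      (2 * π * (Ai (y - 2 * π * w) * rexp (-(2 * π * w) * (t / 2)))) =
      (2 * π) ^ 2 * (Ai (x - 2 * π * w) * Ai (y - 2 * π * w) * Real.exp (-(2 * π * w) * t)) := by
    intro w
    have : rexp (-(2 * π * w) * t) = rexp (-(2 * π * w) * (t / 2)) * rexp (-(2 * π * w) * (t / 2)) := by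
      rw [← Real.exp_add]; ring_nf
    rw [this]; ring
  simp_rw [e] at h
  rw [integral_const_mul, g, smul_eq_mul, abs_of_pos (by positivity)] at h
  have e2 : -(x - y) ^ 2 / (8 * (t / 2)) - t / 2 * (x + y) + 2 * (t / 2) ^ 3 / 3 =
      -(x - y) ^ 2 / (4 * t) - t * (x + y) / 2 + t ^ 3 / 12 := by
    field_simp; ring
  rw [e2] at h
  have e3 : √(π / (2 * (t / 2))) = 2 * π * (√(4 * π * t))⁻¹ := by
    rw [← Real.sqrt_inv, show (2 * π) = √((2 * π) ^ 2) by rw [Real.sqrt_sq (by positivity)],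
      ← Real.sqrt_mul (by positivity)]
    congr 1
    field_simp
    try ring
  rw [e3] at h
  have h2 : (2 * π) ≠ 0 := by positivity
  apply mul_left_cancel₀ h2
  rw [← mul_assoc, ← h, sq, mul_assoc (2 * π) (2 * π), mul_inv_cancel_left₀ h2]
end
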